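/- Let f = p/q be a rational function of two real variables that is bounded near a point v₀ = (x₀,y₀). Then the set of limiting values D_f(v₀) is exactly the closed interval [inf D_f(v₀), sup D_f(v₀)]; in particular D_f(v₀) is a nonempty compact interval. -/

import Mathlib

open MvPolynomial Filter Topology

/-- Evaluation of a two-variable real polynomial at a point of `ℝ²`. -/
noncomputable def pev (p : MvPolynomial (Fin 2) ℝ) (v : ℝ × ℝ) : ℝ :=
  MvPolynomial.eval ![v.1, v.2] p

/-- `p/q` is bounded near `v₀`. -/
def BoundedNear (p q : MvPolynomial (Fin 2) ℝ) (v₀ : ℝ × ℝ) : Prop :=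
  ∃ U ∈ nhds v₀, ∃ M : ℝ, ∀ v ∈ U, pev q v ≠ 0 → |pev p v / pev q v| ≤ M

/-- The set of limiting values of `p/q` at `v₀`. -/
def LimVals (p q : MvPolynomial (Fin 2) ℝ) (v₀ : ℝ × ℝ) : Set ℝ :=
  {d | ∃ v : ℕ → ℝ × ℝ, Filter.Tendsto v Filter.atTop (nhds v₀) ∧ (∀ n, v n ≠ v₀) ∧
    (∀ n, pev q (v n) ≠ 0) ∧
    Filter.Tendsto (fun n => pev p (v n) / pev q (v n)) Filter.atTop (nhds d)}

/-- Gauss's lemma: relatively prime polynomials over a UFD admit a Bezout relation up to a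
nonzero constant. -/
theorem aux_bezout {R : Type*} [CommRing R] [IsDomain R] [UniqueFactorizationMonoid R]
    (P Q : Polynomial R) (hQ : Q ≠ 0)
    (h : ∀ d : Polynomial R, d ∣ P → d ∣ Q → IsUnit d) :
    ∃ A B : Polynomial R, ∃ c : R, c ≠ 0 ∧ A * P + B * Q = Polynomial.C c := by
  classical
  let : NormalizedGCDMonoid R := Nonempty.some inferInstance
  let K := FractionRing R
  let φ := algebraMap R K
  have hφ : Function.Injective φ := IsFractionRing.injective R K
  have hcop : IsCoprime (P.map φ) (Q.map φ) := by
    rw [← EuclideanDomain.gcd_isUnit_iff]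
    set d := EuclideanDomain.gcd (P.map φ) (Q.map φ) with hd
    have hdP : d ∣ P.map φ := EuclideanDomain.gcd_dvd_left _ _
    have hdQ : d ∣ Q.map φ := EuclideanDomain.gcd_dvd_right _ _
    have hd0 : d ≠ 0 := by
      intro h0
      rw [h0, zero_dvd_iff, Polynomial.map_eq_zero_iff hφ] at hdQ
      exact hQ hdQ
    apply Polynomial.isUnit_or_eq_zero_of_isUnit_integerNormalization_primPart (R := R) hd0
    set N := IsLocalization.integerNormalization (nonZeroDivisors R) d with hN
    obtain ⟨b, hb, hbd⟩ := IsLocalization.integerNormalization_spec (nonZeroDivisors R) d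
    have hb0 : φ b ≠ 0 := by
      rw [Ne, map_eq_zero_iff φ hφ]
      exact nonZeroDivisors.ne_zero hb
    have hNd : N.primPart.map φ ∣ d := by
      have h1 : N.primPart.map φ ∣ N.map φ :=
        Polynomial.map_dvd φ (Polynomial.primPart_dvd N)
      have h2 : N.map φ = Polynomial.C (φ b) * d := by
        rw [hN, hbd, ← IsScalarTower.algebraMap_smul K b d, Polynomial.smul_eq_C_mul]
      rw [h2] at h1
      exact (IsUnit.dvd_mul_left (Polynomial.isUnit_C.2 (isUnit_iff_ne_zero.2 hb0))).1 h1
    exact h _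
      ((Polynomial.isPrimitive_primPart N).dvd_of_fraction_map_dvd_fraction_map (K := K)
        (hNd.trans hdP))
      ((Polynomial.isPrimitive_primPart N).dvd_of_fraction_map_dvd_fraction_map (K := K)
        (hNd.trans hdQ))
  obtain ⟨a, b, hab⟩ := hcop
  obtain ⟨s, hs, hsa⟩ := IsLocalization.integerNormalization_spec (nonZeroDivisors R) a
  obtain ⟨t, ht, htb⟩ := IsLocalization.integerNormalization_spec (nonZeroDivisors R) b
  refine ⟨Polynomial.C t * IsLocalization.integerNormalization (nonZeroDivisors R) a,
    Polynomial.C s * IsLocalization.integerNormalization (nonZeroDivisors R) b, s * t,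
    mul_ne_zero (nonZeroDivisors.ne_zero hs) (nonZeroDivisors.ne_zero ht), ?_⟩
  apply Polynomial.map_injective φ hφ
  rw [← IsScalarTower.algebraMap_smul K s a, Polynomial.smul_eq_C_mul] at hsa
  rw [← IsScalarTower.algebraMap_smul K t b, Polynomial.smul_eq_C_mul] at htb
  simp only [Polynomial.map_add, Polynomial.map_mul, Polynomial.map_C, map_mul]
  change Polynomial.C (φ t) * Polynomial.map (algebraMap R K) _ * _ +
    Polynomial.C (φ s) * Polynomial.map (algebraMap R K) _ * _ = _
  rw [hsa, htb]
  linear_combination (Polynomial.C (φ s) * Polynomial.C (φ t)) * hab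

theorem aux_finite_snd (p q : MvPolynomial (Fin 2) ℝ) (hq : q ≠ 0)
    (hcop : ∀ d : MvPolynomial (Fin 2) ℝ, d ∣ p → d ∣ q → IsUnit d) :
    {y : ℝ | ∃ x : ℝ, MvPolynomial.eval ![x, y] p = 0 ∧
      MvPolynomial.eval ![x, y] q = 0}.Finite := by
  let e := MvPolynomial.finSuccEquiv ℝ 1
  obtain ⟨A, B, c, hc, hABc⟩ := aux_bezout (e p) (e q)
    (by simpa using hq) (by
      intro d h1 h2
      have h1' : e.symm d ∣ p := by simpa using map_dvd e.symm h1
      have h2' : e.symm d ∣ q := by simpa using map_dvd e.symm h2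
      have := (hcop _ h1' h2').map e
      simpa using this)
  by_contra hinf
  apply hc
  apply MvPolynomial.funext_set (fun _ => {y : ℝ | ∃ x : ℝ, MvPolynomial.eval ![x, y] p = 0 ∧
      MvPolynomial.eval ![x, y] q = 0}) (fun _ => hinf)
  intro s hs
  obtain ⟨x, hx1, hx2⟩ := hs 0 trivial
  have hv : (![x, s 0] : Fin 2 → ℝ) = Fin.cons x s := by
    funext i
    fin_cases i <;> rfl
  rw [hv, MvPolynomial.eval_eq_eval_mv_eval'] at hx1 hx2
  have := congrArg (fun F => Polynomial.eval x (Polynomial.map (MvPolynomial.eval s) F)) hABc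
  simp only [Polynomial.map_add, Polynomial.map_mul, Polynomial.eval_add, Polynomial.eval_mul,
    Polynomial.map_C, Polynomial.eval_C] at this
  rw [show e p = MvPolynomial.finSuccEquiv ℝ 1 p from rfl,
    show e q = MvPolynomial.finSuccEquiv ℝ 1 q from rfl, hx1, hx2] at this
  simpa using this.symm

theorem aux_finite_fst (p q : MvPolynomial (Fin 2) ℝ) (hq : q ≠ 0)
    (hcop : ∀ d : MvPolynomial (Fin 2) ℝ, d ∣ p → d ∣ q → IsUnit d) :
    {x : ℝ | ∃ y : ℝ, MvPolynomial.eval ![x, y] p = 0 ∧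
      MvPolynomial.eval ![x, y] q = 0}.Finite := by
  let e := MvPolynomial.renameEquiv ℝ (Equiv.swap (0 : Fin 2) 1)
  have he : ∀ (x y : ℝ) (f : MvPolynomial (Fin 2) ℝ),
      MvPolynomial.eval ![y, x] (e f) = MvPolynomial.eval ![x, y] f := by
    intro x y f
    simp only [e, MvPolynomial.renameEquiv_apply, MvPolynomial.eval_rename]
    congr 2
    funext i
    fin_cases i <;> simp
  have := aux_finite_snd (e p) (e q) (by simpa using hq) (by
      intro d h1 h2
      have h1' : e.symm d ∣ p := by simpa using map_dvd e.symm h1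
      have h2' : e.symm d ∣ q := by simpa using map_dvd e.symm h2
      have := (hcop _ h1' h2').map e
      simpa using this)
  simpa only [he] using this

theorem aux_finite (p q : MvPolynomial (Fin 2) ℝ) (hq : q ≠ 0)
    (hcop : ∀ d : MvPolynomial (Fin 2) ℝ, d ∣ p → d ∣ q → IsUnit d) :
    {v : ℝ × ℝ | pev p v = 0 ∧ pev q v = 0}.Finite := by
  refine ((aux_finite_fst p q hq hcop).prod (aux_finite_snd p q hq hcop)).subset ?_
  rintro ⟨x, y⟩ ⟨h1, h2⟩
  exact ⟨⟨y, h1, h2⟩, ⟨x, h1, h2⟩⟩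

theorem aux_continuous (p : MvPolynomial (Fin 2) ℝ) : Continuous (pev p) := by
  unfold pev
  have h : Continuous (fun v : ℝ × ℝ => (![v.1, v.2] : Fin 2 → ℝ)) := by
    refine continuous_pi fun i => ?_
    fin_cases i
    · exact continuous_fst
    · exact continuous_snd
  exact (MvPolynomial.continuous_eval p).comp h

theorem aux_frequently (q : MvPolynomial (Fin 2) ℝ) (hq : q ≠ 0) (v : ℝ × ℝ) :
    ∃ᶠ w in 𝓝 v, pev q w ≠ 0 := by
  intro h
  simp only [not_not] at h
  obtain ⟨r, hr, hball⟩ := Metric.eventually_nhds_iff_ball.1 h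
  apply hq
  apply MvPolynomial.funext_set (![Metric.ball v.1 r, Metric.ball v.2 r])
  · intro i
    fin_cases i
    · exact infinite_of_mem_nhds v.1 (Metric.ball_mem_nhds _ hr)
    · exact infinite_of_mem_nhds v.2 (Metric.ball_mem_nhds _ hr)
  · intro s hs
    have h0 := hs 0 trivial
    have h1 := hs 1 trivial
    have := hball (s 0, s 1) (by
      rw [← ball_prod_same]
      exact ⟨h0, h1⟩)
    have hv : (![s 0, s 1] : Fin 2 → ℝ) = s := by
      funext i
      fin_cases i <;> rfl
    simpa [pev, hv] using this

theorem aux_q_ne_zero (p q : MvPolynomial (Fin 2) ℝ) (hq : q ≠ 0)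
    (hcop : ∀ d : MvPolynomial (Fin 2) ℝ, d ∣ p → d ∣ q → IsUnit d) (v₀ : ℝ × ℝ)
    (hb : BoundedNear p q v₀) : ∀ᶠ v in 𝓝[≠] v₀, pev q v ≠ 0 := by
  obtain ⟨U, hU, M, hM⟩ := hb
  have hF : ∀ᶠ v in 𝓝[≠] v₀, ¬ (pev p v = 0 ∧ pev q v = 0) := by
    have hfin : ({v : ℝ × ℝ | pev p v = 0 ∧ pev q v = 0} \ {v₀}).Finite :=
      (aux_finite p q hq hcop).subset Set.sdiff_subset
    have := hfin.isClosed.isOpen_compl.mem_nhds (x := v₀) (by simp)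
    rw [eventually_nhdsWithin_iff]
    filter_upwards [this] with v hv hne h
    exact hv ⟨h, hne⟩
  have hU' : ∀ᶠ v in 𝓝[≠] v₀, ∀ᶠ w in 𝓝 v, w ∈ U :=
    (eventually_eventually_nhds.2 hU).filter_mono nhdsWithin_le_nhds
  filter_upwards [hF, hU'] with v hv hvU hqv
  apply hv
  refine ⟨?_, hqv⟩
  by_contra hpv
  have hcont : Tendsto (fun w => M * |pev q w| - |pev p w|) (𝓝 v)
      (𝓝 (M * |pev q v| - |pev p v|)) :=
    ((continuous_const.mul (aux_continuous q).abs).sub (aux_continuous p).abs).tendsto v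
  have hneg : M * |pev q v| - |pev p v| < 0 := by
    have := abs_pos.2 hpv
    rw [hqv]
    simpa using hpv
  obtain ⟨w, hw0, hwU, hwn⟩ := ((aux_frequently q hq v).and_eventually
    (hvU.and (hcont.eventually_lt_const hneg))).exists
  have := hM w hwU hw0
  rw [abs_div, div_le_iff₀ (abs_pos.2 hw0)] at this
  linarith

theorem aux_punctured (v : ℝ × ℝ) (r : ℝ) (hr : 0 < r) :
    IsPreconnected (Metric.ball v r \ {v}) := by
  have hrank : 1 < Module.rank ℝ (ℝ × ℝ) := by
    rw [rank_prod', Module.rank_self]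
    norm_num
  have hconn := (isConnected_compl_singleton_of_one_lt_rank hrank (0 : ℝ × ℝ)).isPreconnected
  let g : ℝ × ℝ → ℝ × ℝ := fun y => v + (r / (1 + ‖y‖)) • y
  have hpos : ∀ y : ℝ × ℝ, 0 < 1 + ‖y‖ := fun y => by positivity
  have hg : Continuous g := by
    have h1 : Continuous fun y : ℝ × ℝ => r / (1 + ‖y‖) :=
      continuous_const.div (by fun_prop) (fun y => (hpos y).ne')
    exact continuous_const.add (h1.smul continuous_id')
  have himg : g '' {0}ᶜ = Metric.ball v r \ {v} := by
    ext z
    constructor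
    · rintro ⟨y, hy, rfl⟩
      have hy0 : y ≠ 0 := hy
      refine ⟨?_, ?_⟩
      · rw [Metric.mem_ball, dist_eq_norm]
        simp only [g, add_sub_cancel_left, norm_smul, Real.norm_eq_abs]
        rw [abs_of_pos (div_pos hr (hpos y)), div_mul_eq_mul_div, div_lt_iff₀ (hpos y)]
        nlinarith
      · simp only [g, Set.mem_singleton_iff, add_eq_left, smul_eq_zero, not_or]
        exact ⟨(div_pos hr (hpos y)).ne', hy0⟩
    · rintro ⟨hz, hzv⟩
      rw [Metric.mem_ball, dist_eq_norm] at hz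
      have hd : 0 < r - ‖z - v‖ := by linarith
      have hzv' : z - v ≠ 0 := sub_ne_zero.2 hzv
      refine ⟨(r - ‖z - v‖)⁻¹ • (z - v), ?_, ?_⟩
      · exact smul_ne_zero (inv_ne_zero hd.ne') hzv'
      · simp only [g, norm_smul, norm_inv, Real.norm_eq_abs, abs_of_pos hd, smul_smul]
        have : r / (1 + (r - ‖z - v‖)⁻¹ * ‖z - v‖) * (r - ‖z - v‖)⁻¹ = 1 := by
          have h2 : 1 + (r - ‖z - v‖)⁻¹ * ‖z - v‖ = r * (r - ‖z - v‖)⁻¹ := by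
            field_simp
            ring
          rw [h2]
          field_simp
        rw [this, one_smul]
        abel
  rw [← himg]
  exact hconn.image g hg.continuousOn

theorem limvals_eq_Icc (p q : MvPolynomial (Fin 2) ℝ) (hq : q ≠ 0)
    (hcop : ∀ d : MvPolynomial (Fin 2) ℝ, d ∣ p → d ∣ q → IsUnit d) (v₀ : ℝ × ℝ)
    (hb : BoundedNear p q v₀) :
    LimVals p q v₀ = Set.Icc (sInf (LimVals p q v₀)) (sSup (LimVals p q v₀)) ∧
    (LimVals p q v₀).Nonempty ∧ IsCompact (LimVals p q v₀) := by
  have hq0 := aux_q_ne_zero p q hq hcop v₀ hb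
  obtain ⟨U, hU, M, hM⟩ := hb
  set f : ℝ × ℝ → ℝ := fun v => pev p v / pev q v with hf
  have hD : LimVals p q v₀ = {d | MapClusterPt d (𝓝[≠] v₀) f} := by
    ext d
    constructor
    · rintro ⟨v, hv, hne, -, hlim⟩
      have : Tendsto v atTop (𝓝[≠] v₀) :=
        tendsto_nhdsWithin_iff.2 ⟨hv, Eventually.of_forall hne⟩
      exact MapClusterPt.of_comp this (Tendsto.mapClusterPt hlim)
    · intro hd
      obtain ⟨ψ, h1, h2⟩ := MapClusterPt.exists_seq_tendsto hd
      obtain ⟨N, hN⟩ := eventually_atTop.1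
        ((h2.eventually hq0).and (h2.eventually self_mem_nhdsWithin))
      refine ⟨fun n => ψ (n + N), ?_, ?_, ?_, ?_⟩
      · exact (tendsto_nhdsWithin_iff.1 h2).1.comp (tendsto_add_atTop_nat N)
      · intro n
        exact (hN (n + N) (by omega)).2
      · intro n
        exact (hN (n + N) (by omega)).1
      · exact h1.comp (tendsto_add_atTop_nat N)
  have hbd : ∀ᶠ v in 𝓝[≠] v₀, f v ∈ Set.Icc (-M) M := by
    filter_upwards [hq0, nhdsWithin_le_nhds hU] with v h1 h2
    exact abs_le.1 (hM v h2 h1)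
  have hsub : LimVals p q v₀ ⊆ Set.Icc (-M) M := by
    rw [hD]
    intro d hd
    by_contra hn
    have hd' : MapClusterPt d (𝓝[≠] v₀) f := hd
    obtain ⟨w, hw1, hw2⟩ := ((mapClusterPt_iff_frequently.1 hd' _
      (isClosed_Icc.isOpen_compl.mem_nhds hn)).and_eventually hbd).exists
    exact hw1 hw2
  have hclosed : IsClosed (LimVals p q v₀) := by
    rw [hD]
    exact isClosed_setOfPred_clusterPt
  have hcomp : IsCompact (LimVals p q v₀) := isCompact_Icc.of_isClosed_subset hclosed hsub
  have hne : (LimVals p q v₀).Nonempty := by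
    obtain ⟨d, -, hd⟩ := (isCompact_Icc (a := -M) (b := M)).exists_mapClusterPt
      (f := 𝓝[≠] v₀) (u := f) (Filter.le_principal_iff.2 hbd)
    rw [hD]
    exact ⟨d, hd⟩
  refine ⟨?_, hne, hcomp⟩
  apply Set.Subset.antisymm
  · intro d hd
    exact ⟨csInf_le hcomp.bddBelow hd, le_csSup hcomp.bddAbove hd⟩
  · rintro c ⟨hc1, hc2⟩
    have ha := hcomp.sInf_mem hne
    have hb := hcomp.sSup_mem hne
    set a := sInf (LimVals p q v₀)
    set b := sSup (LimVals p q v₀)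
    rcases hc1.eq_or_lt with h | hac
    · rwa [← h]
    rcases hc2.eq_or_lt with h | hcb
    · rwa [h]
    rw [hD] at ha hb ⊢
    have ha' : MapClusterPt a (𝓝[≠] v₀) f := ha
    have hb' : MapClusterPt b (𝓝[≠] v₀) f := hb
    change MapClusterPt c (𝓝[≠] v₀) f
    rw [mapClusterPt_iff_frequently]
    intro s hs
    rw [frequently_iff]
    intro V hV
    obtain ⟨r, hr, hrV⟩ := Metric.mem_nhdsWithin_iff.1 (inter_mem hV hq0)
    have hset : Metric.ball v₀ r ∩ {v₀}ᶜ = Metric.ball v₀ r \ {v₀} := rfl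
    rw [hset] at hrV
    have hmem : Metric.ball v₀ r \ {v₀} ∈ 𝓝[≠] v₀ :=
      inter_mem (nhdsWithin_le_nhds (Metric.ball_mem_nhds _ hr)) self_mem_nhdsWithin
    obtain ⟨x, hx1, hx2⟩ := ((mapClusterPt_iff_frequently.1 ha' _
      (Iio_mem_nhds hac)).and_eventually hmem).exists
    obtain ⟨y, hy1, hy2⟩ := ((mapClusterPt_iff_frequently.1 hb' _
      (Ioi_mem_nhds hcb)).and_eventually hmem).exists
    have hcont : ContinuousOn f (Metric.ball v₀ r \ {v₀}) :=
      (aux_continuous p).continuousOn.div (aux_continuous q).continuousOn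
        (fun v hv => (hrV hv).2)
    obtain ⟨z, hz, hzc⟩ := (aux_punctured v₀ r hr).intermediate_value hx2 hy2 hcont
      ⟨le_of_lt hx1, le_of_lt hy1⟩
    refine ⟨z, (hrV hz).1, ?_⟩
    rw [hzc]
    exact mem_of_mem_nhds hs
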